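/- Assume each ℓ_i is differentiable with β-Lipschitz gradient (individual β-smoothness, β > 0) and (A1) holds with constant σ ≥ 0. Fix a batch size b ≥ 1, step sizes 0 < γ ≤ 1/β and 0 ≤ ρ ≤ 1/(4β), and a horizon T ≥ 1. From any w_0, define for each batch sequence (J_0,…,J_{T−1}) ∈ ({1,…,n}^b)^T the stochastic m-SAM iterates w_{t+1} = w_t − γ∇L_{J_t}(w_t + ρ∇L_{J_t}(w_t)). Then, averaging uniformly over all batch sequences, (1/T)·E[∑_{t=0}^{T−1} ‖∇L(w_t)‖²] ≤ (8/(3Tγ))·(L(w_0) − E[L(w_T)]) + (8σ²β(γ + 2ρ²β))/(3b). -/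

import Mathlib

open scoped RealInnerProductSpace

/-- The full (training) loss `L(w) = (1/n) ∑ᵢ ℓᵢ(w)`. -/
noncomputable def fullLoss {d n : ℕ} (ℓ : Fin n → EuclideanSpace ℝ (Fin d) → ℝ)
    (w : EuclideanSpace ℝ (Fin d)) : ℝ :=
  (n : ℝ)⁻¹ * ∑ i, ℓ i w

/-- The full gradient `∇L(w) = (1/n) ∑ᵢ ∇ℓᵢ(w)` (given per-example gradients `g i`). -/
noncomputable def fullGrad {d n : ℕ}
    (g : Fin n → EuclideanSpace ℝ (Fin d) → EuclideanSpace ℝ (Fin d))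
    (w : EuclideanSpace ℝ (Fin d)) : EuclideanSpace ℝ (Fin d) :=
  (n : ℝ)⁻¹ • ∑ i, g i w

/-- The mini-batch gradient `∇L_J(w) = (1/b) ∑_{k<b} ∇ℓ_{J k}(w)` for a batch
`J : Fin b → Fin n` (sampling with replacement). -/
noncomputable def batchGrad {d n b : ℕ}
    (g : Fin n → EuclideanSpace ℝ (Fin d) → EuclideanSpace ℝ (Fin d))
    (J : Fin b → Fin n) (w : EuclideanSpace ℝ (Fin d)) : EuclideanSpace ℝ (Fin d) :=
  (b : ℝ)⁻¹ • ∑ k, g (J k) w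

/-!
Smoothness gives `L(w - γ v) ≤ L(w) + γ (γβ/2 ‖v‖² - ⟪∇L(w), v⟫)` for the m-SAM direction
`v = h_J(w + ρ h_J(w))`, where `h_J` is the mini-batch gradient. Since `γβ ≤ 1`, the bracket is a
convex combination of its values at `γβ = 0` and `γβ = 1`, and in both the perturbation `v - h_J(w)`
costs at most its squared norm, hence at most `(ρβ)² ‖h_J(w)‖²`. The remaining terms are linear in
`h_J(w)` or equal to `‖h_J(w) - ∇L(w)‖²`, so averaging over `J` leaves
`-(1/2 - (ρβ)²) ‖∇L(w)‖²` and a multiple of the variance `σ²/b`. Because `w_t` does not depend on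
`J_t`, this one-step bound telescopes along the iterates.
-/

open Finset Function
open scoped BigOperators NNRat NNReal

section Expect

variable {ι κ : Type*}

lemma expect_expect_update {M : Type*} [AddCommMonoid M] [Module ℚ≥0 M] [Fintype ι] [DecidableEq ι]
    [Fintype κ] (i : ι) (F : (ι → κ) → M) :
    𝔼 S, 𝔼 j, F (update S i j) = 𝔼 S, F S := by
  have swap_involutive :
      Involutive fun p : (ι → κ) × κ ↦ (update p.1 i p.2, p.1 i) := by
    rintro ⟨S, j⟩
    simp
  calc 𝔼 S, 𝔼 j, F (update S i j)
      = 𝔼 p : (ι → κ) × κ, F (update p.1 i p.2) := by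
        rw [← univ_product_univ, expect_product]
    _ = 𝔼 p : (ι → κ) × κ, F p.1 :=
        Fintype.expect_equiv swap_involutive.toPerm _ _ fun _ ↦ rfl
    _ = 𝔼 S, 𝔼 _j : κ, F S := by rw [← univ_product_univ, expect_product]
    _ = 𝔼 S, F S := expect_congr rfl fun S _ ↦ by
        have : Nonempty κ := ⟨S i⟩
        exact Fintype.expect_const _

lemma expect_comp_apply {M : Type*} [AddCommMonoid M] [Module ℚ≥0 M] [Fintype ι] [DecidableEq ι]
    [Fintype κ] [Nonempty κ] (i : ι) (F : κ → M) :
    𝔼 S : ι → κ, F (S i) = 𝔼 j, F j := by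
  rw [← expect_expect_update i]
  simp only [update_self, Fintype.expect_const]

lemma norm_expect_le {F : Type*} [SeminormedAddCommGroup F] [NormedSpace ℝ F] [Module ℚ≥0 F]
    (s : Finset ι) (f : ι → F) : ‖𝔼 i ∈ s, f i‖ ≤ 𝔼 i ∈ s, ‖f i‖ :=
  le_expect_of_subadditive norm_zero norm_add_le fun n x ↦ by
    simp [← NNRat.cast_smul_eq_nnqsmul ℝ, norm_smul]

lemma lipschitzWith_expect {X F : Type*} [PseudoMetricSpace X] [SeminormedAddCommGroup F]
    [NormedSpace ℝ F] [Module ℚ≥0 F] [Fintype ι] {f : ι → X → F} {K : ℝ≥0}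
    (hf : ∀ i, LipschitzWith K (f i)) : LipschitzWith K fun x ↦ 𝔼 i, f i x := by
  refine LipschitzWith.of_dist_le_mul fun x y ↦ ?_
  rw [dist_eq_norm, ← expect_sub_distrib]
  refine (norm_expect_le _ _).trans ?_
  obtain _ | _ := isEmpty_or_nonempty ι
  · rw [univ_eq_empty, expect_empty]
    positivity
  · refine expect_le univ_nonempty fun i _ ↦ ?_
    rw [← dist_eq_norm]
    exact (hf i).dist_le_mul x y

variable {E : Type*} [NormedAddCommGroup E] [InnerProductSpace ℝ E] [Module ℚ≥0 E]

lemma inner_expect (s : Finset ι) (f : ι → E) (x : E) : ⟪x, 𝔼 i ∈ s, f i⟫ = 𝔼 i ∈ s, ⟪x, f i⟫ := by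
  simp [expect, ← NNRat.cast_smul_eq_nnqsmul ℝ, inner_smul_right, inner_sum]

lemma expect_inner (s : Finset ι) (f : ι → E) (x : E) : ⟪𝔼 i ∈ s, f i, x⟫ = 𝔼 i ∈ s, ⟪f i, x⟫ := by
  simp only [real_inner_comm x, inner_expect]

lemma expect_norm_sq_eq [Fintype ι] [Nonempty ι] (X : ι → E) {m : E} (hX : 𝔼 i, X i = m) :
    𝔼 i, ‖X i‖ ^ 2 = ‖m‖ ^ 2 + 𝔼 i, ‖X i - m‖ ^ 2 := by
  simp only [norm_sub_sq_real, expect_add_distrib, expect_sub_distrib, ← mul_expect,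
    ← expect_inner, hX, Fintype.expect_const, real_inner_self_eq_norm_sq]
  ring

lemma expect_inner_comp_apply [Fintype ι] [DecidableEq ι] [Fintype κ] [Nonempty κ] {Y : κ → E}
    (hY : 𝔼 j, Y j = 0) (i i' : ι) :
    𝔼 S : ι → κ, ⟪Y (S i), Y (S i')⟫ = if i = i' then 𝔼 j, ‖Y j‖ ^ 2 else 0 := by
  split_ifs with h
  · subst h
    simp only [real_inner_self_eq_norm_sq]
    exact expect_comp_apply i fun j ↦ ‖Y j‖ ^ 2
  · rw [← expect_expect_update i]
    simp only [update_self, update_of_ne (Ne.symm h), ← expect_inner, hY, inner_zero_left,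
      expect_const_zero]

lemma expect_norm_sq_expect_comp [Fintype ι] [DecidableEq ι] [Nonempty ι] [Fintype κ] [Nonempty κ]
    {Y : κ → E} (hY : 𝔼 j, Y j = 0) :
    𝔼 S : ι → κ, ‖𝔼 i, Y (S i)‖ ^ 2 = (𝔼 j, ‖Y j‖ ^ 2) / Fintype.card ι := by
  calc 𝔼 S : ι → κ, ‖𝔼 i, Y (S i)‖ ^ 2
      = 𝔼 S : ι → κ, 𝔼 i, 𝔼 i', ⟪Y (S i), Y (S i')⟫ := by
        simp only [← real_inner_self_eq_norm_sq, expect_inner]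
        simp only [inner_expect]
    _ = 𝔼 i, 𝔼 i', 𝔼 S : ι → κ, ⟪Y (S i), Y (S i')⟫ := by
        rw [expect_comm]
        exact expect_congr rfl fun i _ ↦ expect_comm ..
    _ = (𝔼 j, ‖Y j‖ ^ 2) / Fintype.card ι := by
        simp only [expect_inner_comp_apply hY, Fintype.expect_ite_eq, Fintype.expect_const,
          ← NNRat.cast_smul_eq_nnqsmul ℝ, smul_eq_mul]
        push_cast
        rw [inv_mul_eq_div]

end Expect

section Drift

variable {B X : Type*} {T : ℕ} {Φ : B → X → X} {x₀ : X} {W : (Fin T → B) → ℕ → X}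

/-- `W S t` is the state at time `t` of the system started at `x₀` whose `t`-th transition is
`Φ (S t)`. Nothing is required of `W S t` beyond the horizon `t = T`. -/
structure IsDrivenOrbit (Φ : B → X → X) (x₀ : X) (W : (Fin T → B) → ℕ → X) : Prop where
  zero : ∀ S, W S 0 = x₀
  succ : ∀ S (t : Fin T), W S (t + 1) = Φ (S t) (W S t)

namespace IsDrivenOrbit

lemma update_eq (hW : IsDrivenOrbit Φ x₀ W) (S : Fin T → B) (t : Fin T) (J : B) {s : ℕ}
    (hs : s ≤ t) : W (update S t J) s = W S s := by
  induction s with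
  | zero => rw [hW.zero, hW.zero]
  | succ s ih =>
    have hsT : s < T := by omega
    have hne : (⟨s, hsT⟩ : Fin T) ≠ t := Fin.ne_of_val_ne (Nat.ne_of_lt hs)
    rw [hW.succ _ ⟨s, hsT⟩, hW.succ _ ⟨s, hsT⟩, update_of_ne hne, ih (by omega)]

variable [Fintype B]

-- The state at time `t` does not depend on the `t`-th draw, which may therefore be redrawn.
lemma expect_succ (hW : IsDrivenOrbit Φ x₀ W) (F : X → ℝ) (t : Fin T) :
    𝔼 S, F (W S (t + 1)) = 𝔼 S, 𝔼 J, F (Φ J (W S t)) := by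
  rw [← expect_expect_update t]
  simp only [hW.succ, update_self, hW.update_eq _ _ _ le_rfl]

lemma expect_sum_le_of_drift [Nonempty B] (hW : IsDrivenOrbit Φ x₀ W) {F a : X → ℝ} {c : ℝ}
    (hF : ∀ x, 𝔼 J, F (Φ J x) ≤ F x - a x + c) :
    𝔼 S, ∑ t ∈ range T, a (W S t) ≤ F x₀ - 𝔼 S, F (W S T) + T * c := by
  have drift : ∀ t ∈ range T,
      𝔼 S, a (W S t) ≤ 𝔼 S, F (W S t) - 𝔼 S, F (W S (t + 1)) + c := fun t ht ↦ by
    have h : 𝔼 S, F (W S (t + 1)) ≤ 𝔼 S, (F (W S t) - a (W S t) + c) :=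
      (hW.expect_succ F ⟨t, mem_range.1 ht⟩).trans_le (expect_le_expect fun S _ ↦ hF _)
    rw [expect_add_distrib, expect_sub_distrib, Fintype.expect_const] at h
    linarith
  calc 𝔼 S, ∑ t ∈ range T, a (W S t) = ∑ t ∈ range T, 𝔼 S, a (W S t) := expect_sum_comm ..
    _ ≤ ∑ t ∈ range T, (𝔼 S, F (W S t) - 𝔼 S, F (W S (t + 1)) + c) := sum_le_sum drift
    _ = F x₀ - 𝔼 S, F (W S T) + T * c := by
      rw [sum_add_distrib, sum_range_sub' fun t ↦ 𝔼 S, F (W S t)]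
      simp only [hW.zero, Fintype.expect_const, sum_const, card_range, nsmul_eq_mul]

end IsDrivenOrbit

end Drift

section Descent

variable {E : Type*} [NormedAddCommGroup E] [InnerProductSpace ℝ E]

lemma le_add_inner_add_of_lipschitzWith_gradient [CompleteSpace E] {f : E → ℝ} {f' : E → E}
    {β : ℝ≥0} (hf : ∀ x, HasGradientAt f (f' x) x) (hf' : LipschitzWith β f') (x v : E) :
    f (x + v) ≤ f x + ⟪f' x, v⟫ + β / 2 * ‖v‖ ^ 2 := by
  have hasDerivAt_line (t : ℝ) :
      HasDerivAt (fun t : ℝ ↦ f (x + t • v)) ⟪f' (x + t • v), v⟫ t := by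
    have hline : HasDerivAt (fun t : ℝ ↦ x + t • v) v t := by
      simpa using ((hasDerivAt_id t).smul_const v).const_add x
    exact ((hf (x + t • v)).hasFDerivAt.comp_hasDerivAt t hline).congr_deriv
      (InnerProductSpace.toDual_apply_apply ..)
  have hasDerivAt_model (t : ℝ) :
      HasDerivAt (fun t : ℝ ↦ f x + t * ⟪f' x, v⟫ + β / 2 * t ^ 2 * ‖v‖ ^ 2)
        (⟪f' x, v⟫ + β * t * ‖v‖ ^ 2) t := by
    have hlin := ((hasDerivAt_id t).mul_const ⟪f' x, v⟫).const_add (f x)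
    have hquad := ((hasDerivAt_pow 2 t).const_mul (β / 2 : ℝ)).mul_const (‖v‖ ^ 2)
    refine (hlin.add hquad).congr_deriv ?_
    push_cast
    ring
  have deriv_le {t : ℝ} (ht : 0 ≤ t) : ⟪f' (x + t • v), v⟫ ≤ ⟪f' x, v⟫ + β * t * ‖v‖ ^ 2 := by
    rw [← sub_le_iff_le_add', ← inner_sub_left]
    calc ⟪f' (x + t • v) - f' x, v⟫ ≤ ‖f' (x + t • v) - f' x‖ * ‖v‖ := real_inner_le_norm _ _
      _ ≤ β * ‖x + t • v - x‖ * ‖v‖ := by gcongr; exact hf'.norm_sub_le _ _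
      _ = β * t * ‖v‖ ^ 2 := by
        rw [add_sub_cancel_left, norm_smul, Real.norm_of_nonneg ht]
        ring
  have line_le_model := image_le_of_deriv_right_le_deriv_boundary
    (fun t _ ↦ (hasDerivAt_line t).continuousAt.continuousWithinAt)
    (fun t _ ↦ (hasDerivAt_line t).hasDerivWithinAt) (by simp)
    (fun t _ ↦ (hasDerivAt_model t).continuousAt.continuousWithinAt)
    (fun t _ ↦ (hasDerivAt_model t).hasDerivWithinAt) (fun t ht ↦ deriv_le ht.1)
    (Set.right_mem_Icc.2 zero_le_one)
  simpa using line_le_model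

-- The left side is affine in `a`: at `a = 1` it is `(‖v - G‖² - ‖G‖²) / 2`, and at `a = 0` the
-- perturbation `v - u` only enters through `⟪G, v - u⟫`.
lemma half_mul_norm_sq_sub_inner_le (G u v : E) {a : ℝ} (ha₀ : 0 ≤ a) (ha₁ : a ≤ 1) :
    a / 2 * ‖v‖ ^ 2 - ⟪G, v⟫ ≤
      a * (‖u - G‖ ^ 2 - ‖G‖ ^ 2 / 2) + (1 - a) * (‖G‖ ^ 2 / 2 - ⟪G, u⟫) + ‖v - u‖ ^ 2 := by
  have at_one : ‖v‖ ^ 2 / 2 - ⟪G, v⟫ ≤ ‖u - G‖ ^ 2 - ‖G‖ ^ 2 / 2 + ‖v - u‖ ^ 2 := by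
    have hpar := parallelogram_law_with_norm ℝ (u - G) (v - u)
    have hsq := norm_sub_sq_real v G
    rw [sub_add_sub_cancel'] at hpar
    rw [real_inner_comm] at hsq
    nlinarith [sq_nonneg ‖u - G - (v - u)‖]
  have at_zero : -⟪G, v⟫ ≤ ‖G‖ ^ 2 / 2 - ⟪G, u⟫ + ‖v - u‖ ^ 2 := by
    have hsq := norm_add_sq_real G (v - u)
    rw [inner_sub_right] at hsq
    nlinarith [sq_nonneg ‖G + (v - u)‖, sq_nonneg ‖v - u‖]
  linear_combination a * at_one + (1 - a) * at_zero

end Descent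

section StochasticGradient

/-- The m-SAM update with step size `γ` and perturbation radius `ρ`: the same gradient estimate `h`
is used for the ascent to `w + ρ • h w` and for the descent from `w`. -/
def msamStep {E : Type*} [AddCommGroup E] [Module ℝ E]
    (γ ρ : ℝ) (h : E → E) (w : E) : E :=
  w - γ • h (w + ρ • h w)

variable {B E : Type*} [Fintype B] [NormedAddCommGroup E] [Module ℚ≥0 E]
  {h : B → E → E} {G : E → E} {β : ℝ≥0} {V : ℝ}

/-- A finite stochastic first-order oracle for the vector field `G`: for `J` uniform in `B`,
`h J w` is an unbiased estimate of `G w` with variance at most `V`, and every `h J` is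
`β`-Lipschitz. -/
structure IsGradientOracle (h : B → E → E) (G : E → E) (β : ℝ≥0) (V : ℝ) : Prop where
  lipschitz : ∀ J, LipschitzWith β (h J)
  unbiased : ∀ w, 𝔼 J, h J w = G w
  variance_le : ∀ w, 𝔼 J, ‖h J w - G w‖ ^ 2 ≤ V

namespace IsGradientOracle

lemma variance_bound_nonneg (hG : IsGradientOracle h G β V) : 0 ≤ V :=
  (expect_nonneg fun _ _ ↦ by positivity).trans (hG.variance_le 0)

variable [InnerProductSpace ℝ E]

lemma lipschitzWith_gradient (hG : IsGradientOracle h G β V) : LipschitzWith β G := by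
  simpa only [hG.unbiased] using lipschitzWith_expect hG.lipschitz

lemma miniBatch [Nonempty B] (hG : IsGradientOracle h G β V) (κ : Type*) [Fintype κ]
    [DecidableEq κ] [Nonempty κ] :
    IsGradientOracle (fun (J : κ → B) w ↦ 𝔼 k, h (J k) w) G β (V / Fintype.card κ) where
  lipschitz J := lipschitzWith_expect fun k ↦ hG.lipschitz (J k)
  unbiased w := by
    rw [expect_comm]
    simp only [expect_comp_apply _ fun j ↦ h j w, hG.unbiased, Fintype.expect_const]
  variance_le w := by
    have centered : 𝔼 j, (h j w - G w) = 0 := by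
      rw [expect_sub_distrib, hG.unbiased, Fintype.expect_const, sub_self]
    calc 𝔼 J : κ → B, ‖𝔼 k, h (J k) w - G w‖ ^ 2
        = 𝔼 J : κ → B, ‖𝔼 k, (h (J k) w - G w)‖ ^ 2 := by
          simp only [expect_sub_distrib, Fintype.expect_const]
      _ = (𝔼 j, ‖h j w - G w‖ ^ 2) / Fintype.card κ := expect_norm_sq_expect_comp centered
      _ ≤ V / Fintype.card κ := by gcongr; exact hG.variance_le w

variable [Nonempty B]

lemma expect_norm_sq_sub_le (hG : IsGradientOracle h G β V) (ρ : ℝ) (w : E) :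
    𝔼 J, ‖h J (w + ρ • h J w) - h J w‖ ^ 2 ≤ (ρ * β) ^ 2 * (‖G w‖ ^ 2 + V) := by
  have perturbation_le (J : B) :
      ‖h J (w + ρ • h J w) - h J w‖ ^ 2 ≤ (ρ * β) ^ 2 * ‖h J w‖ ^ 2 := by
    calc ‖h J (w + ρ • h J w) - h J w‖ ^ 2
        ≤ (β * ‖w + ρ • h J w - w‖) ^ 2 := by gcongr; exact (hG.lipschitz J).norm_sub_le _ _
      _ = (ρ * β) ^ 2 * ‖h J w‖ ^ 2 := by
        rw [add_sub_cancel_left, norm_smul, Real.norm_eq_abs, mul_pow, mul_pow, sq_abs]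
        ring
  calc 𝔼 J, ‖h J (w + ρ • h J w) - h J w‖ ^ 2
      ≤ 𝔼 J, (ρ * β) ^ 2 * ‖h J w‖ ^ 2 := expect_le_expect fun J _ ↦ perturbation_le J
    _ = (ρ * β) ^ 2 * (‖G w‖ ^ 2 + 𝔼 J, ‖h J w - G w‖ ^ 2) := by
      rw [← mul_expect, expect_norm_sq_eq _ (hG.unbiased w)]
    _ ≤ (ρ * β) ^ 2 * (‖G w‖ ^ 2 + V) := by gcongr; exact hG.variance_le w

lemma expect_half_mul_norm_sq_sub_inner_le (hG : IsGradientOracle h G β V) (ρ : ℝ) {a : ℝ}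
    (ha₀ : 0 ≤ a) (ha₁ : a ≤ 1) (w : E) :
    𝔼 J, (a / 2 * ‖h J (w + ρ • h J w)‖ ^ 2 - ⟪G w, h J (w + ρ • h J w)⟫) ≤
      (a + (ρ * β) ^ 2) * V - (1 / 2 - (ρ * β) ^ 2) * ‖G w‖ ^ 2 := by
  have averaged := expect_le_expect (s := univ) fun (J : B) _ ↦
    half_mul_norm_sq_sub_inner_le (G w) (h J w) (h J (w + ρ • h J w)) ha₀ ha₁
  simp only [expect_add_distrib, ← mul_expect, expect_sub_distrib, ← inner_expect, hG.unbiased,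
    Fintype.expect_const, real_inner_self_eq_norm_sq] at averaged ⊢
  linear_combination averaged + a * hG.variance_le w + hG.expect_norm_sq_sub_le ρ w

variable [CompleteSpace E] {f : E → ℝ} {γ ρ : ℝ}

lemma expect_msamStep_le (hG : IsGradientOracle h G β V) (hf : ∀ w, HasGradientAt f (G w) w)
    (hγ₀ : 0 ≤ γ) (hγ₁ : γ * β ≤ 1) (w : E) :
    𝔼 J, f (msamStep γ ρ (h J) w) ≤
      f w - γ * (1 / 2 - (ρ * β) ^ 2) * ‖G w‖ ^ 2 + γ * (γ * β + (ρ * β) ^ 2) * V := by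
  have descent (J : B) : f (msamStep γ ρ (h J) w) ≤ f w + γ *
      (γ * β / 2 * ‖h J (w + ρ • h J w)‖ ^ 2 - ⟪G w, h J (w + ρ • h J w)⟫) := by
    refine (sub_eq_add_neg w _ ▸ le_add_inner_add_of_lipschitzWith_gradient hf
      hG.lipschitzWith_gradient w (-(γ • h J (w + ρ • h J w)))).trans_eq ?_
    rw [inner_neg_right, real_inner_smul_right, norm_neg, norm_smul, Real.norm_of_nonneg hγ₀]
    ring
  have averaged := expect_le_expect (s := univ) fun J _ ↦ descent J
  rw [expect_add_distrib, ← mul_expect, Fintype.expect_const] at averaged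
  linear_combination averaged +
    γ * hG.expect_half_mul_norm_sq_sub_inner_le ρ (by positivity) hγ₁ w

lemma mul_expect_sum_norm_sq_gradient_le {T : ℕ} {w₀ : E} {W : (Fin T → B) → ℕ → E}
    (hG : IsGradientOracle h G β V) (hf : ∀ w, HasGradientAt f (G w) w) (hγ₀ : 0 ≤ γ)
    (hγ₁ : γ * β ≤ 1) (hW : IsDrivenOrbit (fun J ↦ msamStep γ ρ (h J)) w₀ W) :
    γ * (1 / 2 - (ρ * β) ^ 2) * 𝔼 S, ∑ t ∈ range T, ‖G (W S t)‖ ^ 2 ≤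
      f w₀ - 𝔼 S, f (W S T) + T * (γ * (γ * β + (ρ * β) ^ 2) * V) := by
  simpa only [mul_expect, mul_sum] using
    hW.expect_sum_le_of_drift (hG.expect_msamStep_le hf hγ₀ hγ₁)

end IsGradientOracle

end StochasticGradient

section FiniteSum

variable {d n b : ℕ} {ℓ : Fin n → EuclideanSpace ℝ (Fin d) → ℝ}
  {g : Fin n → EuclideanSpace ℝ (Fin d) → EuclideanSpace ℝ (Fin d)}

lemma fullGrad_eq_expect (w : EuclideanSpace ℝ (Fin d)) : fullGrad g w = 𝔼 i, g i w := by
  simp [fullGrad, expect, ← NNRat.cast_smul_eq_nnqsmul ℝ]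

lemma batchGrad_eq_expect (J : Fin b → Fin n) (w : EuclideanSpace ℝ (Fin d)) :
    batchGrad g J w = 𝔼 k, g (J k) w := by
  simp [batchGrad, expect, ← NNRat.cast_smul_eq_nnqsmul ℝ]

lemma hasGradientAt_fullLoss {w : EuclideanSpace ℝ (Fin d)}
    (hg : ∀ i, HasGradientAt (ℓ i) (g i w) w) : HasGradientAt (fullLoss ℓ) (fullGrad g w) w := by
  rw [hasGradientAt_iff_hasFDerivAt, fullGrad, map_smul, map_sum]
  exact (HasFDerivAt.fun_sum fun i _ ↦ (hg i).hasFDerivAt).const_mul _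

lemma isGradientOracle_batchGrad (hn : 0 < n) (hb : 0 < b) {β : ℝ≥0} {V : ℝ}
    (hLip : ∀ i, LipschitzWith β (g i))
    (hvar : ∀ w, (n : ℝ)⁻¹ * ∑ i, ‖g i w - fullGrad g w‖ ^ 2 ≤ V) :
    IsGradientOracle (batchGrad (b := b) g) (fullGrad g) β (V / b) := by
  have : NeZero n := ⟨hn.ne'⟩
  have : NeZero b := ⟨hb.ne'⟩
  have single : IsGradientOracle g (fullGrad g) β V :=
    { lipschitz := hLip
      unbiased := fun w ↦ (fullGrad_eq_expect w).symm
      variance_le := fun w ↦ by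
        simpa [Fintype.expect_eq_sum_div_card, div_eq_inv_mul] using hvar w }
  simpa [funext₂ batchGrad_eq_expect] using single.miniBatch (Fin b)

end FiniteSum

theorem msam_stochastic_convergence_general {B E : Type*} [Fintype B] [Nonempty B]
    [NormedAddCommGroup E] [Module ℚ≥0 E] [InnerProductSpace ℝ E] [CompleteSpace E]
    {h : B → E → E} {G : E → E} {β : ℝ≥0} {V : ℝ} {f : E → ℝ} {γ ρ : ℝ} {T : ℕ} {w₀ : E}
    {W : (Fin T → B) → ℕ → E}
    (hG : IsGradientOracle h G β V) (hf : ∀ w, HasGradientAt f (G w) w)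
    (hγ₀ : 0 < γ) (hγ₁ : γ * β ≤ 1) (hρ : (ρ * β) ^ 2 ≤ 1 / 8) (hT : T ≠ 0)
    (hW : IsDrivenOrbit (fun J ↦ msamStep γ ρ (h J)) w₀ W) :
    1 / (T : ℝ) * 𝔼 S, ∑ t ∈ range T, ‖G (W S t)‖ ^ 2 ≤
      8 / (3 * T * γ) * (f w₀ - 𝔼 S, f (W S T)) + 8 * V * β * (γ + 2 * ρ ^ 2 * β) / 3 := by
  set A := 𝔼 S, ∑ t ∈ range T, ‖G (W S t)‖ ^ 2
  set D := f w₀ - 𝔼 S, f (W S T)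
  have hA : 0 ≤ A := expect_nonneg fun S _ ↦ by positivity
  have hV := hG.variance_bound_nonneg
  have bound : γ * (3 / 8) * A ≤ D + T * (γ * (γ * β + 2 * (ρ * β) ^ 2) * V) := by
    calc γ * (3 / 8) * A ≤ γ * (1 / 2 - (ρ * β) ^ 2) * A :=
        mul_le_mul_of_nonneg_right (by gcongr; linarith) hA
      _ ≤ D + T * (γ * (γ * β + (ρ * β) ^ 2) * V) :=
        hG.mul_expect_sum_norm_sq_gradient_le hf hγ₀.le hγ₁ hW
      _ ≤ D + T * (γ * (γ * β + 2 * (ρ * β) ^ 2) * V) := by gcongr; linarith [sq_nonneg (ρ * β)]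
  calc 1 / (T : ℝ) * A = 8 / (3 * T * γ) * (γ * (3 / 8) * A) := by field_simp
    _ ≤ 8 / (3 * T * γ) * (D + T * (γ * (γ * β + 2 * (ρ * β) ^ 2) * V)) := by gcongr
    _ = 8 / (3 * T * γ) * D + 8 * V * β * (γ + 2 * ρ ^ 2 * β) / 3 := by field_simp

/-- Convergence of stochastic m-SAM (same batch in ascent and descent):
under individual `β`-smoothness, (A1), `0 < γ ≤ 1/β`, `0 ≤ ρ ≤ 1/(4β)`, iterating
`w_{t+1} = w_t − γ∇L_{J_t}(w_t + ρ∇L_{J_t}(w_t))` from `w_0` and averaging uniformly over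
all batch sequences,
`(1/T)·E[∑_{t<T} ‖∇L(w_t)‖²] ≤ (8/(3Tγ))(L(w_0) − E[L(w_T)]) + 8σ²β(γ + 2ρ²β)/(3b)`. -/
theorem msam_stochastic_convergence {d n b : ℕ} (hn : 0 < n) (hb : 1 ≤ b)
    (ℓ : Fin n → EuclideanSpace ℝ (Fin d) → ℝ)
    (g : Fin n → EuclideanSpace ℝ (Fin d) → EuclideanSpace ℝ (Fin d))
    (hg : ∀ i x, HasGradientAt (ℓ i) (g i x) x)
    (β : ℝ) (hβ : 0 < β) (hLip : ∀ i, LipschitzWith β.toNNReal (g i))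
    (σ : ℝ) (hσ : 0 ≤ σ)
    (hvar : ∀ x, (n : ℝ)⁻¹ * ∑ i, ‖g i x - fullGrad g x‖ ^ 2 ≤ σ ^ 2)
    (γ ρ : ℝ) (hγ0 : 0 < γ) (hγ1 : γ ≤ 1 / β) (hρ0 : 0 ≤ ρ) (hρ1 : ρ ≤ 1 / (4 * β))
    (T : ℕ) (hT : 1 ≤ T)
    (w0 : EuclideanSpace ℝ (Fin d))
    (W : (Fin T → (Fin b → Fin n)) → ℕ → EuclideanSpace ℝ (Fin d))
    (hW0 : ∀ S, W S 0 = w0)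
    (hWrec : ∀ S, ∀ t : Fin T,
      W S ((t : ℕ) + 1) =
        W S (t : ℕ) - γ • batchGrad g (S t) (W S (t : ℕ) + ρ • batchGrad g (S t) (W S (t : ℕ)))) :
    (1 / (T : ℝ)) *
        ((Fintype.card (Fin T → (Fin b → Fin n)) : ℝ)⁻¹ *
          ∑ S : Fin T → (Fin b → Fin n), ∑ t ∈ Finset.range T, ‖fullGrad g (W S t)‖ ^ 2) ≤
      8 / (3 * T * γ) *
          (fullLoss ℓ w0 -
            (Fintype.card (Fin T → (Fin b → Fin n)) : ℝ)⁻¹ *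
              ∑ S : Fin T → (Fin b → Fin n), fullLoss ℓ (W S T)) +
        8 * σ ^ 2 * β * (γ + 2 * ρ ^ 2 * β) / (3 * b) := by
  have : NeZero n := ⟨hn.ne'⟩
  have hβ' : (β.toNNReal : ℝ) = β := Real.coe_toNNReal β hβ.le
  have hγβ : γ * β ≤ 1 := (le_div_iff₀ hβ).1 hγ1
  have hρβ : (ρ * β) ^ 2 ≤ 1 / 8 := by
    nlinarith [(le_div_iff₀ (by positivity)).1 hρ1, mul_nonneg hρ0 hβ.le]
  have bound := msam_stochastic_convergence_general (isGradientOracle_batchGrad hn hb hLip hvar)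
    (fun w ↦ hasGradientAt_fullLoss fun i ↦ hg i w) hγ0 (hβ'.symm ▸ hγβ) (hβ'.symm ▸ hρβ)
    (Nat.one_le_iff_ne_zero.1 hT) ⟨hW0, hWrec⟩
  simp only [Fintype.expect_eq_sum_div_card, div_eq_inv_mul _ (Fintype.card _ : ℝ), hβ'] at bound
  convert bound using 2
  field_simp
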